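/- If R is right noetherian, left P-injective, left min-CS, and every nonzero complement left ideal of R is not small, then R is quasi-Frobenius. -/

import Mathlib

open MulOpposite in
/-- Right ideals of `R`, as submodules of `R` over `Rᵐᵒᵖ`. -/
abbrev RIdeal (R : Type*) [Ring R] := Submodule Rᵐᵒᵖ R

section Defs
variable (R : Type*) [Ring R]

/-- Left annihilator of a subset. -/
def lAnn (X : Set R) : Set R := {a | ∀ x ∈ X, a * x = 0}

/-- Right annihilator of a subset. -/
def rAnn (X : Set R) : Set R := {a | ∀ x ∈ X, x * a = 0}

/-- Right annihilator of a subset, as a right ideal. -/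
def rAnnI (X : Set R) : RIdeal R where
  carrier := rAnn R X
  add_mem' := by intro a b ha hb x hx; rw [mul_add, ha x hx, hb x hx, add_zero]
  zero_mem' := by intro x hx; rw [mul_zero]
  smul_mem' := by
    intro c a ha x hx
    show x * (a * c.unop) = 0
    rw [← mul_assoc, ha x hx, zero_mul]

/-- `R` is left P-injective: `rl(a) = aR` for every `a`. -/
def IsLeftPInjective : Prop :=
  ∀ a x : R, (∀ u : R, u * a = 0 → u * x = 0) ↔ ∃ s : R, x = a * s

/-- `R` is left 2-injective. -/
def IsLeft2Injective : Prop :=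
  ∀ (a b : R) (f : ↥(Submodule.span R ({a, b} : Set R)) →ₗ[R] R),
    ∃ g : R →ₗ[R] R, ∀ x : ↥(Submodule.span R ({a, b} : Set R)), g (x : R) = f x

/-- `R` is left FP-injective: every matrix ring over `R` is left P-injective. -/
def IsLeftFPInjective : Prop :=
  ∀ n : ℕ, IsLeftPInjective (Matrix (Fin n) (Fin n) R)

/-- A left ideal is small if `K + I = R` implies `K = R`. -/
def IsSmallLeftIdeal (I : Ideal R) : Prop := ∀ K : Ideal R, K ⊔ I = ⊤ → K = ⊤

/-- A complement left ideal: maximal with respect to intersecting some left ideal trivially. -/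
def IsComplementLeftIdeal (C : Ideal R) : Prop :=
  ∃ S : Ideal R, C ⊓ S = ⊥ ∧ ∀ C' : Ideal R, C ≤ C' → C' ⊓ S = ⊥ → C' = C

/-- A right ideal is essential in `R`. -/
def IsEssentialRIdeal (I : RIdeal R) : Prop := ∀ K : RIdeal R, K ⊓ I = ⊥ → K = ⊥

/-- The right socle: the sum of all simple (minimal) right ideals. -/
def rSocle : RIdeal R := sSup {m : RIdeal R | IsSimpleModule Rᵐᵒᵖ m}

/-- The right singular ideal. -/
def rSingular : Set R := {a | IsEssentialRIdeal R (rAnnI R {a})}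

/-- ACC on right annihilators. -/
def ACCOnRightAnnihilators : Prop :=
  ∀ f : ℕ → Set R, (∀ n, ∃ X : Set R, f n = rAnn R X) → (∀ n, f n ⊆ f (n + 1)) →
    ∃ n, ∀ m, n ≤ m → f m = f n

/-- The Jacobson radical, as a set. -/
def jacobsonSet : Set R := (TwoSidedIdeal.jacobson (⊥ : TwoSidedIdeal R) : Set R)

/-- A subset is nilpotent if products of some fixed length of its elements vanish. -/
def IsNilpotentSet (J : Set R) : Prop :=
  ∃ n : ℕ, ∀ f : Fin (n + 1) → R, (∀ i, f i ∈ J) → (List.ofFn f).prod = 0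

/-- `R` is quasi-Frobenius: left noetherian and left self-injective. -/
def IsQuasiFrobenius : Prop := IsNoetherianRing R ∧ Module.Injective R R

/-- `R` is right mininjective. -/
def IsRightMininjective : Prop :=
  ∀ (I : RIdeal R), IsSimpleModule Rᵐᵒᵖ I → ∀ f : I →ₗ[Rᵐᵒᵖ] R,
    ∃ c : R, ∀ x : I, f x = c * (x : R)

/-- `R` is left mininjective. -/
def IsLeftMininjective : Prop :=
  ∀ (I : Ideal R), IsSimpleModule R I → ∀ f : I →ₗ[R] R,
    ∃ c : R, ∀ x : I, f x = (x : R) * c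

/-- `R` is right simple injective. -/
def IsRightSimpleInjective : Prop :=
  ∀ (I : RIdeal R) (f : I →ₗ[Rᵐᵒᵖ] R), IsSimpleModule Rᵐᵒᵖ (LinearMap.range f) →
    ∃ c : R, ∀ x : I, f x = c * (x : R)

/-- `R` is left CS: every left ideal is essential in a direct summand of `R`. -/
def IsLeftCS : Prop :=
  ∀ I : Ideal R, ∃ K : Ideal R, (∃ K' : Ideal R, IsCompl K K') ∧ I ≤ K ∧
    ∀ L : Ideal R, L ≤ K → L ⊓ I = ⊥ → L = ⊥

/-- `R` is left min-CS: every minimal left ideal is essential in a direct summand. -/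
def IsLeftMinCS : Prop :=
  ∀ I : Ideal R, IsSimpleModule R I → ∃ K : Ideal R, (∃ K' : Ideal R, IsCompl K K') ∧ I ≤ K ∧
    ∀ L : Ideal R, L ≤ K → L ⊓ I = ⊥ → L = ⊥

/-- `R` is right Johns: right noetherian and every right ideal is a right annihilator. -/
def IsRightJohns : Prop :=
  IsNoetherianRing Rᵐᵒᵖ ∧ ∀ I : RIdeal R, ∃ X : Set R, (I : Set R) = rAnn R X

end Defs

section MoreDefs
variable (R : Type*) [Ring R]

/-- Left annihilator of a subset, as a left ideal. -/
def lAnnI (X : Set R) : Ideal R where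
  carrier := lAnn R X
  add_mem' := by intro a b ha hb x hx; rw [add_mul, ha x hx, hb x hx, add_zero]
  zero_mem' := by intro x hx; rw [zero_mul]
  smul_mem' := by
    intro c a ha x hx
    show c * a * x = 0
    rw [mul_assoc, ha x hx, mul_zero]

/-- A left ideal is essential in `R`. -/
def IsEssentialLIdeal (I : Ideal R) : Prop := ∀ K : Ideal R, K ⊓ I = ⊥ → K = ⊥

/-- The left singular ideal `Z_l`. -/
def lSingular : Set R := {a | IsEssentialLIdeal R (lAnnI R {a})}

end MoreDefs

/-!
Over a left P-injective ring the left singular ideal `Z_l` equals the Jacobson radical `J`, and the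
right noetherian condition makes `Z_l` nilpotent. If `a ∉ J = Z_l`, some nonzero complement left
ideal meets the left annihilator of `a` trivially; it is not contained in `J`, as it is not small,
and P-injectivity gives `c = c a s` for some `c ∉ J`. Hence every nonzero right ideal of the right
noetherian ring `R / J` contains a nonzero idempotent, and `R / J` is semisimple. So `R` is
semiprimary, and right artinian.

P-injectivity attaches to each maximal left ideal `m` a minimal left ideal of `R`, in such a way
that non-isomorphic `R / m` get non-isomorphic minimal left ideals. There are finitely many types of
simple modules, so each of them occurs in `R`, i.e. `R` is left Kasch. It follows that generators of
minimal right ideals generate minimal left ideals, and the left min-CS condition makes `R` right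
mininjective; it is left mininjective by P-injectivity. Over a mininjective ring `Hom(-, R)` does
not increase length. Applied on both sides, this forces `R` to have the same finite length on either
side, so `Hom(-, R)` preserves the lengths of left ideals, and Baer's criterion follows by counting.
-/

section Jacobson
variable {R : Type*} [Ring R]

theorem isUnit_one_add_of_mem_jacobson {x : R} (hx : x ∈ Ring.jacobson R) : IsUnit (1 + x) := by
  have hasLeftInv : ∀ y ∈ Ring.jacobson R, ∃ z, z * (1 + y) = 1 := fun y hy => by
    rw [← Ideal.jacobson_bot, Ideal.mem_jacobson_iff] at hy
    obtain ⟨z, hz⟩ := hy 1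
    refine ⟨z, sub_eq_zero.1 ?_⟩
    rw [mul_add, add_comm (z * 1)]
    simpa only [mul_one, Ideal.mem_bot] using hz
  obtain ⟨z, hz⟩ := hasLeftInv x hx
  have z_eq : 1 + -(z * x) = z := by rw [← hz]; noncomm_ring
  obtain ⟨w, hw⟩ := hasLeftInv (-(z * x)) (neg_mem (Ideal.mul_mem_left _ z hx))
  rw [z_eq] at hw
  exact ⟨⟨1 + x, z, left_inv_eq_right_inv hw hz ▸ hw, hz⟩, rfl⟩

theorem op_mem_jacobson_of_exists_mul_eq_one {a : R} (h : ∀ y, ∃ z, (1 + a * y) * z = 1) :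
    MulOpposite.op a ∈ Ring.jacobson Rᵐᵒᵖ := by
  rw [← Ideal.jacobson_bot, Ideal.mem_jacobson_iff]
  intro y
  obtain ⟨z, hz⟩ := h y.unop
  refine ⟨MulOpposite.op z, MulOpposite.unop_injective ?_⟩
  simp only [MulOpposite.unop_sub, MulOpposite.unop_add, MulOpposite.unop_mul,
    MulOpposite.unop_op, MulOpposite.unop_one, MulOpposite.unop_zero]
  rw [← hz]
  noncomm_ring

theorem op_mem_jacobson {a : R} (ha : a ∈ Ring.jacobson R) :
    MulOpposite.op a ∈ Ring.jacobson Rᵐᵒᵖ :=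
  op_mem_jacobson_of_exists_mul_eq_one fun y =>
    (isUnit_one_add_of_mem_jacobson (Ideal.mul_mem_right y _ ha)).exists_right_inv

theorem op_mem_jacobson_iff {a : R} :
    MulOpposite.op a ∈ Ring.jacobson Rᵐᵒᵖ ↔ a ∈ Ring.jacobson R := by
  refine ⟨fun h => ?_, op_mem_jacobson⟩
  have : RingHomSurjective (RingEquiv.opOp R).symm.toRingHom := ⟨(RingEquiv.opOp R).symm.surjective⟩
  exact Ring.le_comap_jacobson (RingEquiv.opOp R).symm.toRingHom (op_mem_jacobson h)

end Jacobson

section Singular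
variable {R : Type*} [Ring R]

theorem mem_lSingular_iff {a : R} :
    a ∈ lSingular R ↔ ∀ k, k ≠ 0 → ∃ r, r * k ≠ 0 ∧ r * k * a = 0 := by
  constructor
  · intro ha k hk
    by_contra! hcon
    refine hk (Ideal.span_singleton_eq_bot.1 (ha (Ideal.span {k}) (eq_bot_iff.2 ?_)))
    rintro x ⟨hxk, hxa⟩
    obtain ⟨r, rfl⟩ := Ideal.mem_span_singleton'.1 hxk
    by_contra hrk
    exact hcon r hrk (hxa a rfl)
  · intro h K hK
    refine (Submodule.eq_bot_iff K).2 fun k hkK => ?_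
    by_contra hk
    obtain ⟨r, hrk, hrka⟩ := h k hk
    refine hrk ((Submodule.eq_bot_iff _).1 hK (r * k) ⟨K.mul_mem_left r hkK, ?_⟩)
    rintro x rfl
    exact hrka

theorem IsLeftPInjective.mem_lSingular_iff_mem_jacobson (hP : IsLeftPInjective R) {a : R} :
    a ∈ lSingular R ↔ a ∈ Ring.jacobson R := by
  rw [mem_lSingular_iff]
  constructor
  · intro ha
    refine op_mem_jacobson_iff.1 (op_mem_jacobson_of_exists_mul_eq_one fun y => ?_)
    suffices h : ∀ u, u * (1 + a * y) = 0 → u * 1 = 0 from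
      ((hP _ _).1 h).imp fun _ => Eq.symm
    intro u hu
    rw [mul_one]
    by_contra hu0
    obtain ⟨r, hru, hrua⟩ := ha u hu0
    refine hru ?_
    calc r * u = r * (u * (1 + a * y)) - r * u * a * y := by noncomm_ring
      _ = 0 := by rw [hu, hrua, mul_zero, zero_mul, sub_zero]
  · intro ha k hk
    by_contra! hcon
    obtain ⟨s, hs⟩ := (hP (k * a) k).1 fun u hu => by
      by_contra huk
      exact hcon u huk (by rwa [mul_assoc])
    have hunit : IsUnit (1 + -(a * s)) :=
      isUnit_one_add_of_mem_jacobson (neg_mem (Ideal.mul_mem_right s _ ha))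
    refine hk ((hunit.mul_left_eq_zero).1 ?_)
    rw [← sub_eq_add_neg, mul_sub, mul_one, ← mul_assoc, ← hs, sub_self]

end Singular

section Nilpotent
variable {R : Type*} [Ring R] [IsNoetherian Rᵐᵒᵖ R]

theorem exists_pow_leftAnnihilator_stable (I : Ideal R) :
    ∃ n, ∀ x, (∀ y ∈ I ^ (n + 1), x * y = 0) → ∀ y ∈ I ^ n, x * y = 0 := by
  let annihilator : ℕ →o RIdeal R :=
    { toFun := fun n =>
        { carrier := {x | ∀ y ∈ I ^ n, x * y = 0}
          add_mem' := fun hx hx' y hy => by rw [add_mul, hx y hy, hx' y hy, add_zero]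
          zero_mem' := fun y _ => zero_mul y
          smul_mem' := fun c x hx y hy => by
            rw [MulOpposite.smul_eq_mul_unop, mul_assoc]
            exact hx _ ((I ^ n).mul_mem_left _ hy) }
      monotone' := fun _ _ hmn _ hx y hy => hx y (Ideal.pow_le_pow_right hmn hy) }
  obtain ⟨n, hn⟩ := monotone_stabilizes_iff_noetherian.2 ‹_› annihilator
  exact ⟨n, fun x hx => (hn (n + 1) n.le_succ).ge hx⟩

/- If `t * (y * j) ≠ 0` with `j ∈ Z_l`, then some `r` has `r * t * y ≠ 0` and `r * t * y * j = 0`,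
so `r * t` has a strictly larger right annihilator than `t`. -/
theorem isNilpotent_of_forall_mem_lSingular (I : Ideal R)
    (hI : ∀ a ∈ I, a ∈ lSingular R) : IsNilpotent I := by
  obtain ⟨n, hn⟩ := exists_pow_leftAnnihilator_stable I
  refine ⟨n, ?_⟩
  by_contra hpow
  have one_moves : ∃ t : R, ∃ y ∈ I ^ n, t * y ≠ 0 := by
    obtain ⟨y, hy, hy0⟩ := Submodule.exists_mem_ne_zero_of_ne_bot hpow
    exact ⟨1, y, hy, by rwa [one_mul]⟩
  obtain ⟨t, ⟨y₀, hy₀, hty₀⟩, hmax⟩ := exists_maximalFor_of_wellFoundedGT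
    (fun t => ∃ y ∈ I ^ n, t * y ≠ 0) (fun t => rAnnI R {t}) one_moves
  suffices ∀ z ∈ I ^ (n + 1), t * z = 0 from hty₀ (hn t this y₀ hy₀)
  have kills : ∀ y ∈ I ^ n, ∀ j ∈ I, t * (y * j) = 0 := by
    intro y hy j hj
    by_contra hne
    have hty : t * y ≠ 0 := fun h => hne (by rw [← mul_assoc, h, zero_mul])
    obtain ⟨r, hrty, hrtyj⟩ := mem_lSingular_iff.1 (hI j hj) (t * y) hty
    have le : rAnnI R {t} ≤ rAnnI R {r * t} := by
      rintro x hx _ rfl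
      rw [mul_assoc, hx t rfl, mul_zero]
    refine hne (hmax ⟨y, hy, by rwa [mul_assoc]⟩ le ?_ t rfl)
    rintro _ rfl
    rw [← hrtyj]
    noncomm_ring
  intro z hz
  rw [Submodule.pow_succ] at hz
  induction hz using Submodule.smul_induction_on' with
  | smul y hy j hj => exact kills y hy j hj
  | add x _ y _ hx hy => rw [mul_add, hx, hy, add_zero]

end Nilpotent

section Lattice
variable {α : Type*}

theorem exists_le_maximal_disjoint [CompleteLattice α] [IsCompactlyGenerated α] {a b : α}
    (h : Disjoint a b) : ∃ c, a ≤ c ∧ Maximal (Disjoint · b) c :=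
  zorn_le_nonempty₀ {c | Disjoint c b}
    (fun s hs hchain _ _ =>
      ⟨sSup s, hchain.directedOn.disjoint_sSup_left.2 fun _ hc => hs hc, fun _ => le_sSup⟩) a h

theorem complementedLattice_of_forall_exists_isComplemented_le [Lattice α] [BoundedOrder α]
    [IsModularLattice α] [WellFoundedGT α]
    (h : ∀ a : α, a ≠ ⊥ → ∃ b ≤ a, b ≠ ⊥ ∧ IsComplemented b) : ComplementedLattice α := by
  refine ⟨fun a => ?_⟩
  obtain ⟨k, ⟨hka, k', hk⟩, hmax⟩ := exists_maximalFor_of_wellFoundedGT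
    (fun k => k ≤ a ∧ IsComplemented k) id ⟨⊥, bot_le, isComplemented_bot⟩
  suffices hbot : a ⊓ k' = ⊥ by
    have : a = k := by
      rw [← sup_bot_eq k, ← hbot, inf_comm, ← sup_inf_assoc_of_le k' hka, hk.sup_eq_top, top_inf_eq]
    exact this ▸ ⟨k', hk⟩
  by_contra hne
  obtain ⟨b, hb, hb0, b', hbb'⟩ := h _ hne
  have hbk' : b ≤ k' := hb.trans inf_le_right
  have hcompl : IsCompl (k ⊔ b) (k' ⊓ b') := by
    refine IsCompl.of_eq ?_ ?_
    · rw [← inf_assoc, sup_comm, sup_inf_assoc_of_le k hbk', hk.inf_eq_bot, sup_bot_eq,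
        hbb'.inf_eq_bot]
    · rw [sup_assoc, inf_comm, ← sup_inf_assoc_of_le b' hbk', hbb'.sup_eq_top, top_inf_eq,
        hk.sup_eq_top]
  have hbk : b ≤ k := le_sup_right.trans
    (hmax ⟨sup_le hka (hb.trans inf_le_left), _, hcompl⟩ le_sup_left)
  exact hb0 (le_bot_iff.1 (hk.disjoint hbk hbk'))

end Lattice

section Semisimple
variable {R : Type*} [Ring R]

theorem isComplemented_span_of_isIdempotentElem {e : R} (he : IsIdempotentElem e) :
    IsComplemented (Ideal.span {e}) := by
  have idem : IsIdempotentElem (LinearMap.toSpanSingleton R R e) := LinearMap.ext fun r => by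
    simp only [Module.End.mul_apply, LinearMap.toSpanSingleton_apply, smul_eq_mul, mul_assoc, he.eq]
  rw [← Ideal.submodule_span_eq, ← LinearMap.range_toSpanSingleton]
  exact ⟨_, LinearMap.IsIdempotentElem.isCompl idem⟩

theorem exists_isIdempotentElem_mul [IsNoetherianRing R]
    (h : ∀ a : R, a ≠ 0 → ∃ c s : R, c ≠ 0 ∧ c = s * a * c) {a : R} (ha : a ≠ 0) :
    ∃ x, a * x ≠ 0 ∧ IsIdempotentElem (a * x) := by
  obtain ⟨y, hy, hmax⟩ := exists_maximalFor_of_wellFoundedGT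
    (fun y => a * y ≠ 0) (fun y => lAnnI R {a * y}) ⟨1, by rwa [mul_one]⟩
  set b := a * y with hb
  obtain ⟨d, s, hd, hds⟩ := h b hy
  have hbd : a * (y * d) ≠ 0 := fun h0 => hd (by rw [hds, mul_assoc, hb, mul_assoc a, h0, mul_zero])
  have le : lAnnI R {b} ≤ lAnnI R {a * (y * d)} := by
    rintro u hu _ rfl
    rw [← mul_assoc a, ← mul_assoc, hu b rfl, zero_mul]
  have mem : b * s - 1 ∈ lAnnI R {a * (y * d)} := by
    rintro _ rfl
    calc (b * s - 1) * (a * (y * d)) = b * (s * b * d) - b * d := by rw [hb]; noncomm_ring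
      _ = 0 := by rw [← hds, sub_self]
  have regular : b * s * b = b := by
    rw [← sub_eq_zero, ← hmax hbd le mem b rfl, sub_mul, one_mul]
  refine ⟨y * s, fun h0 => hy ?_, ?_⟩
  · rw [← regular, hb, mul_assoc a, h0, zero_mul]
  · rw [← mul_assoc, ← hb, IsIdempotentElem, ← mul_assoc, regular]

theorem isSemisimpleRing_of_forall_exists_eq_mul_mul [IsNoetherianRing R]
    (h : ∀ a : R, a ≠ 0 → ∃ c s : R, c ≠ 0 ∧ c = s * a * c) : IsSemisimpleRing R := by
  suffices ComplementedLattice (Ideal R) from { this with }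
  refine complementedLattice_of_forall_exists_isComplemented_le fun I hI => ?_
  obtain ⟨a, haI, ha⟩ := Submodule.exists_mem_ne_zero_of_ne_bot hI
  obtain ⟨x, hax, idem⟩ := exists_isIdempotentElem_mul h ha
  have idem_swap : IsIdempotentElem (x * (a * x) * a) := by
    calc x * (a * x) * a * (x * (a * x) * a) = x * ((a * x) * (a * x) * (a * x)) * a := by
          noncomm_ring
      _ = x * (a * x) * a := by rw [idem.eq, idem.eq]
  refine ⟨Ideal.span {x * (a * x) * a}, ?_, ?_, isComplemented_span_of_isIdempotentElem idem_swap⟩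
  · exact (Ideal.span_singleton_le_iff_mem I).2 (I.mul_mem_left _ haI)
  · refine fun hbot => hax ?_
    calc a * x = (a * x) * (a * x) * (a * x) := by rw [idem.eq, idem.eq]
      _ = a * (x * (a * x) * a) * x := by noncomm_ring
      _ = 0 := by rw [Ideal.span_singleton_eq_bot.1 hbot, mul_zero, zero_mul]

theorem isSmallLeftIdeal_of_le_jacobson {I : Ideal R} (hI : I ≤ Ring.jacobson R) :
    IsSmallLeftIdeal R I := by
  intro K hK
  by_contra hKtop
  obtain ⟨M, hM, hKM⟩ := Ideal.exists_le_maximal K hKtop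
  exact hM.ne_top (eq_top_iff.2
    (hK ▸ sup_le hKM (hI.trans (Ring.jacobson_le_of_isMaximal M))))

theorem IsLeftPInjective.exists_eq_mul_mul_of_notMem_jacobson (hP : IsLeftPInjective R)
    (hC : ∀ C : Ideal R, IsComplementLeftIdeal R C → C ≠ ⊥ → ¬ IsSmallLeftIdeal R C)
    {a : R} (ha : a ∉ Ring.jacobson R) :
    ∃ c s, c ∉ Ring.jacobson R ∧ c = c * a * s := by
  obtain ⟨K, hKa, hK⟩ : ∃ K : Ideal R, K ⊓ lAnnI R {a} = ⊥ ∧ K ≠ ⊥ := by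
    by_contra! ess
    exact ha (hP.mem_lSingular_iff_mem_jacobson.1 ess)
  obtain ⟨C, hKC, hCmax⟩ := exists_le_maximal_disjoint (disjoint_iff.2 hKa)
  have hCcompl : IsComplementLeftIdeal R C :=
    ⟨lAnnI R {a}, hCmax.prop.eq_bot, fun C' hCC' hC' =>
      (hCmax.eq_of_le (disjoint_iff.2 hC') hCC').symm⟩
  have hCJ : ¬ C ≤ Ring.jacobson R := fun hle =>
    hC C hCcompl (ne_bot_of_le_ne_bot hK hKC) (isSmallLeftIdeal_of_le_jacobson hle)
  obtain ⟨c, hcC, hcJ⟩ := SetLike.not_le_iff_exists.1 hCJ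
  obtain ⟨s, hs⟩ := (hP (c * a) c).1 fun u hu =>
    Submodule.disjoint_def.1 hCmax.prop _ (C.mul_mem_left u hcC) (by
      rintro _ rfl
      rwa [mul_assoc])
  exact ⟨c, s, hcJ, hs⟩

theorem IsLeftPInjective.isSemisimpleRing_quotient_jacobson [IsNoetherianRing Rᵐᵒᵖ]
    (hP : IsLeftPInjective R)
    (hC : ∀ C : Ideal R, IsComplementLeftIdeal R C → C ≠ ⊥ → ¬ IsSmallLeftIdeal R C) :
    IsSemisimpleRing (R ⧸ Ring.jacobson R) := by
  let π := Ideal.Quotient.mk (Ring.jacobson R)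
  have : IsNoetherianRing (R ⧸ Ring.jacobson R)ᵐᵒᵖ :=
    isNoetherianRing_of_surjective _ _ (RingHom.op π)
      (MulOpposite.op_surjective.comp
        (Ideal.Quotient.mk_surjective.comp MulOpposite.unop_surjective))
  rw [← isSemisimpleRing_mulOpposite_iff]
  refine isSemisimpleRing_of_forall_exists_eq_mul_mul fun b hb => ?_
  obtain ⟨a, ha⟩ := Ideal.Quotient.mk_surjective b.unop
  have haJ : a ∉ Ring.jacobson R := fun h =>
    hb (MulOpposite.unop_injective (ha.symm.trans (Ideal.Quotient.eq_zero_iff_mem.2 h)))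
  obtain ⟨c, s, hcJ, hcs⟩ := hP.exists_eq_mul_mul_of_notMem_jacobson hC haJ
  refine ⟨MulOpposite.op (π c), MulOpposite.op (π s), fun h => hcJ ?_, ?_⟩
  · exact Ideal.Quotient.eq_zero_iff_mem.1 (MulOpposite.op_injective h)
  · apply MulOpposite.unop_injective
    simp only [MulOpposite.unop_mul, MulOpposite.unop_op, ← ha]
    rw [← map_mul, ← map_mul, ← mul_assoc, ← hcs]

end Semisimple

section Semiprimary
variable {R : Type*} [Ring R]

theorem unop_mem_jacobson_pow (n : ℕ) :
    ∀ x ∈ Ring.jacobson Rᵐᵒᵖ ^ n, x.unop ∈ Ring.jacobson R ^ n := by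
  induction n with
  | zero => simp only [Submodule.pow_zero, Ideal.one_eq_top, Submodule.mem_top, implies_true]
  | succ n ih =>
    intro x hx
    rw [Submodule.pow_succ] at hx
    rw [Ideal.IsTwoSided.pow_succ]
    induction hx using Submodule.smul_induction_on' with
    | smul p hp q hq => exact Ideal.mul_mem_mul (op_mem_jacobson_iff.1 hq) (ih p hp)
    | add p _ q _ hp hq => exact Ideal.add_mem _ hp hq

theorem isSemisimpleRing_quotient_jacobson_mulOpposite [IsSemisimpleRing (R ⧸ Ring.jacobson R)] :
    IsSemisimpleRing (Rᵐᵒᵖ ⧸ Ring.jacobson Rᵐᵒᵖ) := by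
  let π := Ideal.Quotient.mk (Ring.jacobson Rᵐᵒᵖ)
  let φ : R →+* (Rᵐᵒᵖ ⧸ Ring.jacobson Rᵐᵒᵖ)ᵐᵒᵖ := π.op.comp (RingEquiv.opOp R).toRingHom
  have φ_eq_zero : ∀ a ∈ Ring.jacobson R, φ a = 0 := fun a ha =>
    MulOpposite.unop_injective (Ideal.Quotient.eq_zero_iff_mem.2 (op_mem_jacobson ha))
  have φ_surj : Function.Surjective φ :=
    MulOpposite.op_surjective.comp (Ideal.Quotient.mk_surjective.comp MulOpposite.op_surjective)
  rw [← isSemisimpleRing_mulOpposite_iff]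
  exact RingHom.isSemisimpleRing_of_surjective (Ideal.Quotient.lift _ φ φ_eq_zero)
    (Ideal.Quotient.lift_surjective_of_surjective _ φ_eq_zero φ_surj)

theorem isSemiprimaryRing_mulOpposite [IsSemiprimaryRing R] : IsSemiprimaryRing Rᵐᵒᵖ where
  isSemisimpleRing := isSemisimpleRing_quotient_jacobson_mulOpposite
  isNilpotent := by
    obtain ⟨n, hn⟩ := IsSemiprimaryRing.isNilpotent (R := R)
    refine ⟨n, (Submodule.eq_bot_iff _).2 fun x hx => MulOpposite.unop_injective ?_⟩
    have := unop_mem_jacobson_pow n x hx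
    rwa [hn] at this

end Semiprimary

open Submodule

section SimpleCyclic
variable {R M : Type*} [Ring R] [AddCommGroup M] [Module R M] {x y : M}

theorem isSimpleModule_span_singleton_iff :
    IsSimpleModule R (R ∙ x) ↔
      Ideal.IsMaximal (LinearMap.ker (LinearMap.toSpanSingleton R M x)) := by
  rw [Ideal.isMaximal_def, ← isSimpleModule_iff_isCoatom, ← LinearMap.range_toSpanSingleton,
    (LinearMap.toSpanSingleton R M x).quotKerEquivRange.isSimpleModule_iff]

theorem ne_zero_of_isSimpleModule_span_singleton (hx : IsSimpleModule R (R ∙ x)) : x ≠ 0 :=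
  fun h => (isSimpleModule_iff_isAtom.1 hx).1 (span_singleton_eq_bot.2 h)

theorem ker_toSpanSingleton_eq_of_isMaximal {m : Ideal R} [hm : m.IsMaximal] (hx : x ≠ 0)
    (h : ∀ r ∈ m, r • x = 0) : (LinearMap.toSpanSingleton R M x).ker = m :=
  (hm.eq_of_le (fun htop => hx (by simpa using (Ideal.eq_top_iff_one _).1 htop)) h).symm

theorem isSimpleModule_span_singleton_of_forall_smul_eq_zero {N : Type*} [AddCommGroup N]
    [Module R N] {z : N} (hx : IsSimpleModule R (R ∙ x)) (hz : z ≠ 0)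
    (h : ∀ r : R, r • x = 0 → r • z = 0) : IsSimpleModule R (R ∙ z) := by
  have hmax := isSimpleModule_span_singleton_iff.1 hx
  rw [isSimpleModule_span_singleton_iff,
    ker_toSpanSingleton_eq_of_isMaximal (m := LinearMap.ker (LinearMap.toSpanSingleton R M x)) hz h]
  exact hmax

theorem exists_smul_eq_of_isSimpleModule_span_singleton (hx : IsSimpleModule R (R ∙ x))
    (hy : y ∈ R ∙ x) (hy0 : y ≠ 0) : ∃ r : R, r • y = x := by
  have hspan : R ∙ y = R ∙ x :=
    ((isSimpleModule_iff_isAtom.1 hx).le_iff_eq (mt span_singleton_eq_bot.1 hy0)).1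
      ((span_singleton_le_iff_mem y _).2 hy)
  exact mem_span_singleton.1 (hspan ▸ mem_span_singleton_self x)

theorem nonempty_quotient_linearEquiv_of_mul_mem {m m' : Ideal R} [hm : m.IsMaximal]
    [m'.IsMaximal] {w : R} (hw : w ∉ m) (h : ∀ r ∈ m', r * w ∈ m) :
    Nonempty ((R ⧸ m') ≃ₗ[R] R ⧸ m) := by
  have : IsSimpleModule R (R ⧸ m) := isSimpleModule_iff_isCoatom.2 hm.out
  have hw0 : m.mkQ w ≠ 0 := mt (Submodule.Quotient.mk_eq_zero m).1 hw
  have hker : (LinearMap.toSpanSingleton R (R ⧸ m) (m.mkQ w)).ker = m' :=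
    ker_toSpanSingleton_eq_of_isMaximal hw0 fun r hr =>
      (Submodule.Quotient.mk_eq_zero m).2 (h r hr)
  rw [← hker]
  exact ⟨(LinearMap.toSpanSingleton R (R ⧸ m) (m.mkQ w)).quotKerEquivOfSurjective
    (IsSimpleModule.toSpanSingleton_surjective R hw0)⟩

end SimpleCyclic

section Socle
variable {R M : Type*} [Ring R] [AddCommGroup M] [Module R M]

theorem exists_smul_ne_zero_forall_mem_smul_eq_zero {I : Ideal R}
    (hI : IsNilpotent I) {x : M} (hx : x ≠ 0) : ∃ r : R, r • x ≠ 0 ∧ ∀ j ∈ I, j • r • x = 0 := by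
  obtain ⟨n, hn⟩ := hI
  have hnx : ∀ j ∈ I ^ n, j • x = 0 := by simp [hn]
  clear hn
  induction n generalizing x with
  | zero => exact absurd (by simpa using hnx 1 (by simp [Submodule.pow_zero])) hx
  | succ n ih =>
    by_cases hIx : ∀ j ∈ I, j • x = 0
    · exact ⟨1, by rwa [one_smul], fun j hj => by rw [one_smul, hIx j hj]⟩
    · push Not at hIx
      obtain ⟨i, hi, hix⟩ := hIx
      obtain ⟨r, hr, hrI⟩ := ih hix fun j hj => by
        rw [smul_smul]
        exact hnx _ (Submodule.pow_succ (M := I) ▸ Ideal.mul_mem_mul hj hi)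
      exact ⟨r * i, by rwa [mul_smul], fun j hj => by rw [mul_smul, hrI j hj]⟩

theorem exists_isSimpleModule_span_smul [IsSemiprimaryRing R] {x : M} (hx : x ≠ 0) :
    ∃ r : R, IsSimpleModule R (R ∙ r • x) := by
  obtain ⟨s, hsx, hJ⟩ := exists_smul_ne_zero_forall_mem_smul_eq_zero
    (IsSemiprimaryRing.isNilpotent (R := R)) hx
  have torsion : Module.IsTorsionBySet R (R ∙ s • x) (Ring.jacobson R) := by
    rintro ⟨y, hy⟩ ⟨j, hj⟩
    obtain ⟨r, rfl⟩ := mem_span_singleton.1 hy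
    refine Subtype.ext ?_
    change j • r • s • x = 0
    rw [smul_smul, hJ _ (Ideal.mul_mem_right r _ hj)]
  let _ := torsion.module
  have : IsSemisimpleModule R (R ∙ s • x) := torsion.isSemisimpleModule_iff.1 inferInstance
  obtain hbot | ⟨S, hS, hSimple⟩ :=
    IsSemisimpleModule.eq_bot_or_exists_simple_le (R ∙ s • x)
  · exact absurd (span_singleton_eq_bot.1 hbot) hsx
  have hAtom := isSimpleModule_iff_isAtom.1 hSimple
  obtain ⟨y, hyS, hy⟩ := exists_mem_ne_zero_of_ne_bot hAtom.1
  obtain ⟨r, rfl⟩ := mem_span_singleton.1 (hS hyS)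
  refine ⟨r * s, ?_⟩
  have : R ∙ r • s • x = S := (hAtom.le_iff_eq
    (mt span_singleton_eq_bot.1 hy)).1 ((span_singleton_le_iff_mem _ _).2 hyS)
  rwa [mul_smul, this]

end Socle

section MaximalLeftIdeals

theorem nonempty_linearEquiv_of_isotypicComponent_eq {R M : Type*} [Ring R] [AddCommGroup M]
    [Module R M] {S T : Submodule R M} [IsSimpleModule R S]
    [IsSimpleModule R T]
    (h : isotypicComponent R M S = isotypicComponent R M T) : Nonempty (S ≃ₗ[R] T) :=
  isIsotypicOfType_submodule_iff.1 (.isotypicComponent R M T) S (h ▸ S.le_isotypicComponent)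

theorem exists_rel_apply_of_finite_quotient {α : Type*} (s : Setoid α) [Finite (Quotient s)]
    (g : α → α) (hg : ∀ a b, s (g a) (g b) → s a b) (a : α) : ∃ b, s (g b) a := by
  have inj : Function.Injective fun q : Quotient s => Quotient.mk s (g q.out) := fun q q' h =>
    Quotient.out_equiv_out.1 (hg _ _ (Quotient.exact h))
  obtain ⟨q, hq⟩ := Finite.surjective_of_injective inj (Quotient.mk s a)
  exact ⟨q.out, Quotient.exact hq⟩

variable (R : Type*) [Ring R]

/-- Two maximal left ideals are equivalent when they are the annihilators of elements of isomorphic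
simple modules, so that the quotient is the set of isomorphism classes of simple left modules. -/
def simpleTypeSetoid : Setoid {m : Ideal R // m.IsMaximal} where
  r m m' := Nonempty ((R ⧸ m.1) ≃ₗ[R] R ⧸ m'.1)
  iseqv := ⟨fun _ => ⟨.refl R _⟩, fun ⟨e⟩ => ⟨e.symm⟩, fun ⟨e⟩ ⟨e'⟩ => ⟨e.trans e'⟩⟩

instance finite_quotient_simpleTypeSetoid [IsSemisimpleRing (R ⧸ Ring.jacobson R)] :
    Finite (Quotient (simpleTypeSetoid R)) := by
  let Q := R ⧸ Ring.jacobson R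
  let toQuotient : Q →ₛₗ[Ideal.Quotient.mk (Ring.jacobson R)] Q :=
    { toFun := id
      map_add' := fun _ _ => rfl
      map_smul' := fun _ _ => rfl }
  have : IsSemisimpleModule R Q :=
    (toQuotient.isSemisimpleModule_iff_of_bijective Function.bijective_id).2 ‹IsSemisimpleRing Q›
  have embeds (m : {m : Ideal R // m.IsMaximal}) :
      ∃ S : Submodule R Q, Nonempty (S ≃ₗ[R] R ⧸ m.1) := by
    have := m.2
    let p := Submodule.factor (Ring.jacobson_le_of_isMaximal m.1)
    obtain ⟨S, ⟨e⟩⟩ := IsSemisimpleModule.exists_submodule_linearEquiv_quotient (LinearMap.ker p)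
    exact ⟨S, ⟨e.trans (p.quotKerEquivOfSurjective (Submodule.factor_surjective _))⟩⟩
  choose S e using embeds
  have simple (m) : IsSimpleModule R (S m) :=
    (e m).some.isSimpleModule_iff.2 (isSimpleModule_iff_isCoatom.2 m.2.out)
  refine Finite.of_injective (β := isotypicComponents R Q)
    (fun q => ⟨isotypicComponent R Q (S q.out), S q.out, simple _, rfl⟩) fun q q' h => ?_
  obtain ⟨φ⟩ := nonempty_linearEquiv_of_isotypicComponent_eq (Subtype.ext_iff.1 h)
  exact Quotient.out_equiv_out.1 ⟨((e _).some.symm.trans φ).trans (e _).some⟩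

end MaximalLeftIdeals

section Kasch
variable {R : Type*} [Ring R]

theorem exists_one_sub_mem_forall_mul_mem {I m : Ideal R} [I.IsTwoSided]
    [IsSemisimpleRing (R ⧸ I)] (hIm : I ≤ m) : ∃ f, 1 - f ∈ m ∧ ∀ r ∈ m, r * f ∈ I := by
  let π := Ideal.Quotient.mk I
  have hπ : Function.Surjective π := Ideal.Quotient.mk_surjective
  obtain ⟨e, idem, he⟩ := IsSemisimpleRing.ideal_eq_span_idempotent (m.map π)
  obtain ⟨g, rfl⟩ := hπ e
  refine ⟨1 - g, ?_, fun r hr => Ideal.Quotient.eq_zero_iff_mem.1 ?_⟩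
  · obtain ⟨x, hx, hxg⟩ := (Ideal.mem_map_iff_of_surjective π hπ).1
      (he ▸ Ideal.mem_span_singleton_self (π g))
    rw [sub_sub_cancel, ← sub_add_cancel g x]
    exact m.add_mem (hIm (Ideal.Quotient.eq.1 hxg.symm)) hx
  · obtain ⟨s, hs⟩ := Ideal.mem_span_singleton'.1 (he ▸ Ideal.mem_map_of_mem π hr)
    rw [map_mul, map_sub, map_one, mul_sub, mul_one, ← hs, mul_assoc, idem.eq, sub_self]

theorem mul_eq_zero_of_isSimpleModule_span_singleton {k j : R} (hk : IsSimpleModule R (R ∙ k))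
    (hj : j ∈ lSingular R) : k * j = 0 := by
  obtain ⟨r, hr, hrj⟩ := mem_lSingular_iff.1 hj k (ne_zero_of_isSimpleModule_span_singleton hk)
  obtain ⟨s, hs⟩ := exists_smul_eq_of_isSimpleModule_span_singleton hk
    (mem_span_singleton.2 ⟨r, rfl⟩) hr
  rw [← hs, smul_eq_mul, smul_eq_mul, mul_assoc, hrj, mul_zero]

/-- `R` is left Kasch if every simple left module embeds in `R`, stated as: every maximal left ideal
annihilates a nonzero element. -/
def IsLeftKasch (R : Type*) [Ring R] : Prop :=
  ∀ m : Ideal R, m.IsMaximal → ∃ z ≠ 0, ∀ r ∈ m, r * z = 0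

theorem IsLeftPInjective.exists_isSimpleModule_span_mul_eq [IsSemiprimaryRing R]
    (hP : IsLeftPInjective R) (m : Ideal R) [m.IsMaximal] :
    ∃ f p : R, (∀ r ∈ m, r * f ∈ Ring.jacobson R) ∧ IsSimpleModule R (R ∙ p) ∧ p * f = p := by
  have hJm := Ring.jacobson_le_of_isMaximal m
  obtain ⟨f, hfm, hmf⟩ := exists_one_sub_mem_forall_mul_mem hJm
  have hfJ : f ∉ lSingular R := fun h => Ideal.IsMaximal.ne_top ‹_› <| (Ideal.eq_top_iff_one m).2 <|
    sub_add_cancel 1 f ▸ m.add_mem hfm (hJm (hP.mem_lSingular_iff_mem_jacobson.1 h))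
  rw [mem_lSingular_iff] at hfJ
  push Not at hfJ
  obtain ⟨k, hk, hkf⟩ := hfJ
  obtain ⟨r, hr⟩ := exists_isSimpleModule_span_smul (R := R) hk
  have hrkf : r * k * f ≠ 0 := hkf r (ne_zero_of_isSimpleModule_span_singleton hr)
  refine ⟨f, r * k * f, hmf, ?_, ?_⟩
  · refine isSimpleModule_span_singleton_of_forall_smul_eq_zero hr hrkf fun s hs => ?_
    rw [smul_eq_mul, ← mul_assoc, ← smul_eq_mul s (r * k), ← smul_eq_mul r k, hs, zero_mul]
  · have := mul_eq_zero_of_isSimpleModule_span_singleton hr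
      (hP.mem_lSingular_iff_mem_jacobson.2 (hmf _ hfm))
    rw [← sub_eq_zero, ← neg_eq_zero, ← this, smul_eq_mul]
    noncomm_ring

theorem IsLeftPInjective.nonempty_quotient_linearEquiv_of_span_linearEquiv {m m' : Ideal R}
    [m.IsMaximal] [m'.IsMaximal] (hP : IsLeftPInjective R) {f p f' p' : R}
    (hf : ∀ r ∈ m, r * f ∈ Ring.jacobson R) (hpf : p * f = p) (hp : IsSimpleModule R (R ∙ p))
    (hf' : ∀ r ∈ m', r * f' ∈ Ring.jacobson R) (hpf' : p' * f' = p')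
    (hp' : IsSimpleModule R (R ∙ p')) (e : (R ∙ p) ≃ₗ[R] R ∙ p') :
    Nonempty ((R ⧸ m') ≃ₗ[R] R ⧸ m) := by
  obtain ⟨u, hu⟩ := mem_span_singleton.1 (e ⟨p, mem_span_singleton_self p⟩).2
  obtain ⟨v, hv⟩ := (hP (u • p') p).1 fun r hr => by
    have : r • (⟨p, mem_span_singleton_self p⟩ : R ∙ p) = 0 := by
      apply e.injective
      ext
      rw [map_smul, map_zero, coe_smul, ← hu]
      exact hr
    exact Subtype.ext_iff.1 this
  have hw : f' * v ∉ m := fun hmem => ne_zero_of_isSimpleModule_span_singleton hp <| by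
    have hJ : f' * v * f ∈ Ring.jacobson R := hf _ hmem
    calc p = u * p' * v * f := by rw [← smul_eq_mul u, ← hv, hpf]
      _ = u * (p' * (f' * v * f)) := by
        nth_rewrite 1 [← hpf']
        noncomm_ring
      _ = 0 := by
        rw [mul_eq_zero_of_isSimpleModule_span_singleton hp'
          (hP.mem_lSingular_iff_mem_jacobson.2 hJ), mul_zero]
  refine nonempty_quotient_linearEquiv_of_mul_mem hw fun r hr => ?_
  rw [← mul_assoc]
  exact Ring.jacobson_le_of_isMaximal m (Ideal.mul_mem_right v _ (hf' r hr))

theorem IsLeftPInjective.isLeftKasch [IsSemiprimaryRing R] (hP : IsLeftPInjective R) :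
    IsLeftKasch R := by
  choose f p hf hp hpf using fun m : {m : Ideal R // m.IsMaximal} =>
    have := m.2
    hP.exists_isSimpleModule_span_mul_eq m.1
  let σ (m : {m : Ideal R // m.IsMaximal}) : {m : Ideal R // m.IsMaximal} :=
    ⟨LinearMap.ker (LinearMap.toSpanSingleton R R (p m)),
      isSimpleModule_span_singleton_iff.1 (hp m)⟩
  have quotientEquiv (m) : (R ⧸ (σ m).1) ≃ₗ[R] R ∙ p m :=
    (LinearMap.toSpanSingleton R R (p m)).quotKerEquivRange.trans
      (.ofEq _ _ (LinearMap.range_toSpanSingleton _))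
  intro m hm
  obtain ⟨m', ⟨e⟩⟩ := exists_rel_apply_of_finite_quotient (simpleTypeSetoid R) σ
    (fun a b ⟨e⟩ => by
      have := a.2
      have := b.2
      exact (hP.nonempty_quotient_linearEquiv_of_span_linearEquiv (hf a) (hpf a) (hp a) (hf b)
        (hpf b) (hp b)
        ((quotientEquiv a).symm.trans (e.trans (quotientEquiv b)))).map .symm) ⟨m, hm⟩
  let ι : R ⧸ m →ₗ[R] R :=
    (R ∙ p m').subtype ∘ₗ (e.symm.trans (quotientEquiv m')).toLinearMap
  have hι : Function.Injective ι :=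
    (R ∙ p m').subtype_injective.comp (e.symm.trans (quotientEquiv m')).injective
  refine ⟨ι (m.mkQ 1), fun h => hm.ne_top ?_, fun r hr => ?_⟩
  · exact (Ideal.eq_top_iff_one m).2 <|
      (Submodule.Quotient.mk_eq_zero m).1 (hι (h.trans (map_zero ι).symm))
  · calc r * ι (m.mkQ 1) = ι (m.mkQ r) := by
          rw [← smul_eq_mul, ← map_smul, ← map_smul, smul_eq_mul, mul_one]
      _ = 0 := by rw [mkQ_apply, (Submodule.Quotient.mk_eq_zero m).2 hr, map_zero]

end Kasch

/-- The module `E` over `R`, with commuting action of `S`, is mininjective if every `R`-linear map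
from a simple submodule to `E` is the action of some `s : S`. The simple submodule and the map
are encoded by a generator `x` and its image `y`. -/
def IsMininjective (R S E : Type*) [Ring R] [Ring S] [AddCommGroup E] [Module R E] [Module S E] :
    Prop :=
  ∀ x y : E, IsSimpleModule R (R ∙ x) → (∀ r : R, r • x = 0 → r • y = 0) → ∃ s : S, s • x = y

section Mininjective
variable {R : Type*} [Ring R]

theorem IsLeftPInjective.isMininjective (hP : IsLeftPInjective R) :
    IsMininjective R Rᵐᵒᵖ R := by
  intro x y _ hxy
  obtain ⟨s, hs⟩ := (hP x y).1 hxy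
  exact ⟨MulOpposite.op s, hs.symm⟩

theorem IsLeftPInjective.isSimpleModule_span_of_isSimpleModule_span_op (hP : IsLeftPInjective R)
    (hK : IsLeftKasch R) {k : R} (hk : IsSimpleModule Rᵐᵒᵖ (Rᵐᵒᵖ ∙ k)) :
    IsSimpleModule R (R ∙ k) := by
  have hk0 := ne_zero_of_isSimpleModule_span_singleton hk
  obtain ⟨m, hm, hkm⟩ := Ideal.exists_le_maximal (LinearMap.ker (LinearMap.toSpanSingleton R R k))
    fun htop => hk0 (by simpa using (Ideal.eq_top_iff_one _).1 htop)
  obtain ⟨z, hz, hmz⟩ := hK m hm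
  obtain ⟨s, rfl⟩ := (hP k z).1 fun r hr => hmz r (hkm hr)
  obtain ⟨t, ht⟩ := exists_smul_eq_of_isSimpleModule_span_singleton hk
    (mem_span_singleton.2 ⟨MulOpposite.op s, rfl⟩) hz
  have hmk : ∀ r ∈ m, r • k = 0 := fun r hr => by
    have hcomm := smul_comm r t (MulOpposite.op s • k)
    rw [ht] at hcomm
    exact hcomm.trans ((congrArg (t • ·) (hmz r hr)).trans (smul_zero t))
  rw [isSimpleModule_span_singleton_iff, ker_toSpanSingleton_eq_of_isMaximal hk0 hmk]
  exact hm

theorem exists_forall_mem_iff_mul_eq_zero {K K' : Ideal R} (h : IsCompl K K') :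
    ∃ f : R, ∀ x, x ∈ K ↔ x * f = 0 := by
  obtain ⟨e, he, f, hf, hef⟩ := mem_sup.1 (h.sup_eq_top ▸ mem_top (x := (1 : R)))
  have decomp (x : R) : x = x * e + x * f := by rw [← mul_add, hef, mul_one]
  refine ⟨f, fun x => ⟨fun hx => ?_, fun hx => ?_⟩⟩
  · refine disjoint_def.1 h.disjoint _ ?_ (K'.mul_mem_left x hf)
    exact ((K.add_mem_iff_right (K.mul_mem_left x he)).1 (decomp x ▸ hx))
  · rw [decomp x, hx, add_zero]
    exact K.mul_mem_left x he

theorem IsLeftMinCS.mem_span_of_isSimpleModule_span (hmincs : IsLeftMinCS R) {k k' : R}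
    (hk : IsSimpleModule R (R ∙ k)) (hk' : IsSimpleModule R (R ∙ k'))
    (h : ∀ r, k * r = 0 → k' * r = 0) : k' ∈ R ∙ k := by
  obtain ⟨K, ⟨K', hKK'⟩, hkK, hess⟩ := hmincs (R ∙ k) hk
  obtain ⟨f, hf⟩ := exists_forall_mem_iff_mul_eq_zero hKK'
  have hk'K : k' ∈ K := (hf k').2 (h f ((hf k).1 (hkK (mem_span_singleton_self k))))
  have hatom := isSimpleModule_iff_isAtom.1 hk'
  have hne : (R ∙ k') ⊓ (R ∙ k) ≠ ⊥ := fun hbot =>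
    hatom.1 (hess _ ((span_singleton_le_iff_mem _ _).2 hk'K) hbot)
  exact inf_eq_left.1 ((hatom.le_iff_eq hne).1 inf_le_left) (mem_span_singleton_self k')

theorem IsLeftMinCS.isMininjective_mulOpposite (hmincs : IsLeftMinCS R)
    (hP : IsLeftPInjective R) (hK : IsLeftKasch R) : IsMininjective Rᵐᵒᵖ R R := by
  intro k k' hk h
  by_cases hk'0 : k' = 0
  · exact ⟨0, by rw [zero_smul, hk'0]⟩
  · have hk' := isSimpleModule_span_singleton_of_forall_smul_eq_zero hk hk'0 h
    exact mem_span_singleton.1 (hmincs.mem_span_of_isSimpleModule_span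
      (hP.isSimpleModule_span_of_isSimpleModule_span_op hK hk)
      (hP.isSimpleModule_span_of_isSimpleModule_span_op hK hk') fun r => h (MulOpposite.op r))

end Mininjective

section LengthDuality
variable {R S E : Type*} [Ring R] [Ring S] [AddCommGroup E] [Module R E] [Module S E]
  [SMulCommClass R S E]

theorem IsMininjective.length_linearMap_le_one (h : IsMininjective R S E) (T : Type*)
    [AddCommGroup T] [Module R T] [IsSimpleModule R T] : Module.length S (T →ₗ[R] E) ≤ 1 := by
  cases subsingleton_or_nontrivial (T →ₗ[R] E)
  · rw [Module.length_eq_zero]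
    exact zero_le_one
  have := IsSimpleModule.nontrivial R T
  obtain ⟨t, ht⟩ := exists_ne (0 : T)
  have htop : R ∙ t = ⊤ := by
    rw [← LinearMap.range_toSpanSingleton]
    exact LinearMap.range_eq_top.2 (IsSimpleModule.toSpanSingleton_surjective R ht)
  have ht_simple : IsSimpleModule R (R ∙ t) := htop ▸ topEquiv.isSimpleModule_iff.2 ‹_›
  suffices IsSimpleModule S (T →ₗ[R] E) from
    (Module.length_eq_one S _).le
  refine isSimpleModule_iff_toSpanSingleton_surjective.2 ⟨‹_›, fun f hf g => ?_⟩
  have inj : Function.Injective f := f.injective_of_ne_zero hf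
  have hft : IsSimpleModule R (R ∙ f t) :=
    isSimpleModule_span_singleton_of_forall_smul_eq_zero ht_simple
      ((map_ne_zero_iff f inj).2 ht) fun r hr => by rw [← map_smul, hr, map_zero]
  obtain ⟨s, hs⟩ := h (f t) (g t) hft fun r hr => by
    rw [← map_smul] at hr ⊢
    rw [(map_eq_zero_iff f inj).1 hr, map_zero]
  exact ⟨s, LinearMap.ext_on htop (Set.eqOn_singleton.2 hs)⟩

variable {M : Type*} [AddCommGroup M] [Module R M]

variable (R) in
theorem length_eq_add_length_quotient (N : Submodule R M) :
    Module.length R M = Module.length R N + Module.length R (M ⧸ N) :=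
  Module.length_eq_add_of_exact N.subtype N.mkQ N.subtype_injective N.mkQ_surjective
    (LinearMap.exact_subtype_mkQ N)

variable (S E) in
theorem length_linearMap_eq_add (N : Submodule R M) :
    Module.length S (M →ₗ[R] E) = Module.length S ((M ⧸ N) →ₗ[R] E) +
      Module.length S (LinearMap.range (LinearMap.lcomp S E N.subtype)) := by
  refine Module.length_eq_add_of_exact (LinearMap.lcomp S E N.mkQ)
    (LinearMap.lcomp S E N.subtype).rangeRestrict (fun f g hfg => linearMap_qext N hfg)
    (LinearMap.surjective_rangeRestrict _) fun f => ?_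
  rw [LinearMap.rangeRestrict, ← LinearMap.mem_ker, LinearMap.ker_codRestrict, LinearMap.mem_ker]
  constructor
  · intro hf
    have hker : N ≤ LinearMap.ker f := fun x hx => LinearMap.congr_fun hf ⟨x, hx⟩
    exact ⟨N.liftQ f hker, N.liftQ_mkQ f hker⟩
  · rintro ⟨g, rfl⟩
    ext x
    exact (congrArg g ((Submodule.Quotient.mk_eq_zero N).2 x.2)).trans g.map_zero

theorem IsMininjective.length_linearMap_le (h : IsMininjective R S E) :
    Module.length S (M →ₗ[R] E) ≤ Module.length R M := by
  by_cases hM : IsFiniteLength R M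
  · induction hM with
    | of_subsingleton => rw [Module.length_eq_zero]; exact bot_le
    | @of_simple_quotient M _ _ N _ _ ih =>
      rw [length_linearMap_eq_add S E N, add_comm, length_eq_add_length_quotient R N,
        Module.length_eq_one R (M ⧸ N)]
      exact add_le_add ((Module.length_le_of_injective _ (subtype_injective _)).trans ih)
        (h.length_linearMap_le_one _)
  · rw [← Module.length_ne_top_iff, not_not] at hM
    exact hM ▸ le_top

theorem IsMininjective.lcomp_subtype_surjective (h : IsMininjective R S E)
    (hfin : Module.length R M ≠ ⊤) (hM : Module.length R M ≤ Module.length S (M →ₗ[R] E))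
    (N : Submodule R M) : Function.Surjective (LinearMap.lcomp S E N.subtype) := by
  have hadd := length_eq_add_length_quotient R N
  rw [hadd, ne_eq, ENat.add_eq_top, not_or] at hfin
  have hlen : Module.length R N ≤
      Module.length S (LinearMap.range (LinearMap.lcomp S E N.subtype)) := by
    refine (ENat.add_le_add_iff_right hfin.2).1 ?_
    rw [← hadd]
    refine hM.trans ?_
    rw [length_linearMap_eq_add S E N, add_comm]
    gcongr
    exact h.length_linearMap_le
  have hNE : IsFiniteLength S (N →ₗ[R] E) :=
    Module.length_ne_top_iff.1 (ne_top_of_le_ne_top hfin.1 h.length_linearMap_le)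
  obtain ⟨_, _⟩ := isFiniteLength_iff_isNoetherian_isArtinian.1 hNE
  rw [← LinearMap.range_eq_top]
  by_contra hne
  exact (h.length_linearMap_le.trans hlen).not_gt (Submodule.length_lt hne)

end LengthDuality

section QuasiFrobenius
variable {R S E : Type*} [Ring R] [Ring S] [AddCommGroup E] [Module R E] [Module S E]
  [SMulCommClass R S E]

theorem IsMininjective.length_le_length_self (h : IsMininjective R S E) :
    Module.length S E ≤ Module.length R R :=
  (LinearMap.ringLmapEquivSelf R S E).length_eq ▸ h.length_linearMap_le

theorem IsMininjective.baer (h : IsMininjective R S E) (hfin : Module.length R R ≠ ⊤)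
    (hle : Module.length R R ≤ Module.length S E) : Module.Baer R E := by
  rw [← (LinearMap.ringLmapEquivSelf R S E).length_eq] at hle
  intro I g
  obtain ⟨f, hf⟩ := h.lcomp_subtype_surjective hfin hle I g
  exact ⟨f, fun x hx => LinearMap.congr_fun hf ⟨x, hx⟩⟩

theorem isQuasiFrobenius_of_isMininjective {R : Type*} [Ring R] [IsNoetherianRing Rᵐᵒᵖ]
    [IsArtinianRing Rᵐᵒᵖ] (hl : IsMininjective R Rᵐᵒᵖ R) (hr : IsMininjective Rᵐᵒᵖ R R) :
    IsQuasiFrobenius R := by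
  have hle := hr.length_le_length_self
  have hfin : Module.length R R ≠ ⊤ := ne_top_of_le_ne_top Module.length_ne_top hle
  rw [← (MulOpposite.opLinearEquiv Rᵐᵒᵖ : R ≃ₗ[Rᵐᵒᵖ] Rᵐᵒᵖ).length_eq] at hle
  exact ⟨(isFiniteLength_iff_isNoetherian_isArtinian.1 (Module.length_ne_top_iff.1 hfin)).1,
    (hl.baer hfin hle).injective⟩

end QuasiFrobenius

/-- Right noetherian, left P-injective, left min-CS, nonzero complement left ideals
not small imply QF. -/
theorem stmt9 (R : Type*) [Ring R] [IsNoetherianRing Rᵐᵒᵖ] (hP : IsLeftPInjective R)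
    (hmincs : IsLeftMinCS R)
    (hC : ∀ C : Ideal R, IsComplementLeftIdeal R C → C ≠ ⊥ → ¬ IsSmallLeftIdeal R C) :
    IsQuasiFrobenius R := by
  have : IsNoetherian Rᵐᵒᵖ R := isNoetherian_of_linearEquiv
    (MulOpposite.opLinearEquiv Rᵐᵒᵖ : R ≃ₗ[Rᵐᵒᵖ] Rᵐᵒᵖ).symm
  have hnil : IsNilpotent (Ring.jacobson R) :=
    isNilpotent_of_forall_mem_lSingular _ fun _ => hP.mem_lSingular_iff_mem_jacobson.2
  have hss := hP.isSemisimpleRing_quotient_jacobson hC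
  have : IsSemiprimaryRing R := ⟨hss, hnil⟩
  have := isSemiprimaryRing_mulOpposite (R := R)
  have : IsArtinianRing Rᵐᵒᵖ := IsSemiprimaryRing.isNoetherian_iff_isArtinian.1 ‹_›
  exact isQuasiFrobenius_of_isMininjective hP.isMininjective
    (hmincs.isMininjective_mulOpposite hP hP.isLeftKasch)
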